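/- (The full current–Virasoro algebra Vir_c ⋉̃_{k0,g}( ĝl(N)_{k1,k2} ⊕̃_{g'} ĝ_k ) of eqs. (3.7) and (4.4) is a Lie algebra.) Let 𝔤 be a finite-dimensional real Lie algebra, B : 𝔤 × 𝔤 → ℝ a symmetric invariant bilinear form (B([X,Y],Z) = B(X,[Y,Z])), and φ_g, φ_{g'} : 𝔤 → ℝ linear functionals vanishing on [𝔤,𝔤]. Fix real constants c, k0, k1, k2, k. Then the bilinear bracket on W ⊕ L gl(N) ⊕ L𝔤 ⊕ ℝC defined by [L_m, L_n] = (m−n) L_{m+n} + (c/12)(m³−m) δ_{m+n,0} C; [L_m, X(n)] = −n X(m+n) + (k0/2) m² δ_{m+n,0} tr(X) C for X ∈ gl(N); [L_m, Y(n)] = −n Y(m+n) + (1/2) m² δ_{m+n,0} φ_g(Y) C for Y ∈ 𝔤; [X(m), X'(n)] = [X,X'](m+n) + m δ_{m+n,0} ( k1 tr(XX') + k2 tr(X) tr(X') ) C for X, X' ∈ gl(N); [Y(m), Y'(n)] = [Y,Y'](m+n) + k m δ_{m+n,0} B(Y,Y') C for Y, Y' ∈ 𝔤; [X(m), Y(n)]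 = −[Y(n), X(m)] = m δ_{m+n,0} tr(X) φ_{g'}(Y) C for X ∈ gl(N), Y ∈ 𝔤; [C, ·] = 0; is antisymmetric and satisfies the Jacobi identity, i.e. it defines a Lie algebra over ℝ. -/

import Mathlib

/-- Underlying vector space `W ⊕ L gl(N) ⊕ L𝔤 ⊕ ℝC` of the full current–Virasoro
algebra `Vir_c ⋉̃_{k₀,g}( ĝl(N)_{k₁,k₂} ⊕̃_{g'} ĝ_k )`. -/
abbrev CurVir (N : ℕ) (𝔤 : Type*) [LieRing 𝔤] [LieAlgebra ℝ 𝔤] : Type _ :=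
  (ℤ →₀ ℝ) × (ℤ →₀ Matrix (Fin N) (Fin N) ℝ) × (ℤ →₀ 𝔤) × ℝ

/-- The bracket of eqs. (3.7) and (4.4), defined bilinearly by
`[L_m, L_n] = (m−n) L_{m+n} + (c/12)(m³−m) δ_{m+n,0} C`;
`[L_m, X(n)] = −n X(m+n) + (k₀/2) m² δ_{m+n,0} tr(X) C` for `X ∈ gl(N)`;
`[L_m, Y(n)] = −n Y(m+n) + (1/2) m² δ_{m+n,0} φ_g(Y) C` for `Y ∈ 𝔤`;
`[X(m), X'(n)] = (XX'−X'X)(m+n) + m δ_{m+n,0}(k₁ tr(XX') + k₂ tr(X)tr(X')) C`;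
`[Y(m), Y'(n)] = [Y,Y'](m+n) + k m δ_{m+n,0} B(Y,Y') C`;
`[X(m), Y(n)] = m δ_{m+n,0} tr(X) φ_{g'}(Y) C` for `X ∈ gl(N)`, `Y ∈ 𝔤`;
`[C, ·] = 0`. -/
noncomputable def curVirBracket (N : ℕ) (𝔤 : Type*) [LieRing 𝔤] [LieAlgebra ℝ 𝔤]
    (B : 𝔤 →ₗ[ℝ] 𝔤 →ₗ[ℝ] ℝ) (φg φg' : 𝔤 →ₗ[ℝ] ℝ) (c k0 k1 k2 k : ℝ)
    (x y : CurVir N 𝔤) : CurVir N 𝔤 :=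
  ⟨x.1.sum fun m a => y.1.sum fun n b =>
      Finsupp.single (m + n) (a * b * ((m : ℝ) - (n : ℝ))),
   (x.1.sum fun m a => y.2.1.sum fun n X =>
        Finsupp.single (m + n) ((a * (-(n : ℝ))) • X))
    + (x.2.1.sum fun m X => y.1.sum fun n b =>
        Finsupp.single (m + n) ((b * (m : ℝ)) • X))
    + (x.2.1.sum fun m X => y.2.1.sum fun n X' =>
        Finsupp.single (m + n) (X * X' - X' * X)),
   (x.1.sum fun m a => y.2.2.1.sum fun n Y =>
        Finsupp.single (m + n) ((a * (-(n : ℝ))) • Y))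
    + (x.2.2.1.sum fun m Y => y.1.sum fun n b =>
        Finsupp.single (m + n) ((b * (m : ℝ)) • Y))
    + (x.2.2.1.sum fun m Y => y.2.2.1.sum fun n Y' => Finsupp.single (m + n) ⁅Y, Y'⁆),
   (x.1.sum fun m a => a * y.1 (-m) * (c / 12) * ((m : ℝ) ^ 3 - (m : ℝ)))
    + ((x.1.sum fun m a => a * (k0 / 2) * (m : ℝ) ^ 2 * (y.2.1 (-m)).trace)
        - (y.1.sum fun n b => b * (k0 / 2) * (n : ℝ) ^ 2 * (x.2.1 (-n)).trace))
    + ((x.1.sum fun m a => a * (1 / 2) * (m : ℝ) ^ 2 * φg (y.2.2.1 (-m)))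
        - (y.1.sum fun n b => b * (1 / 2) * (n : ℝ) ^ 2 * φg (x.2.2.1 (-n))))
    + (x.2.1.sum fun m X =>
        (m : ℝ) * (k1 * (X * y.2.1 (-m)).trace + k2 * X.trace * (y.2.1 (-m)).trace))
    + (x.2.2.1.sum fun m Y => k * (m : ℝ) * B Y (y.2.2.1 (-m)))
    + ((x.2.1.sum fun m X => (m : ℝ) * X.trace * φg' (y.2.2.1 (-m)))
        - (y.2.1.sum fun n X => (n : ℝ) * X.trace * φg' (x.2.2.1 (-n))))⟩

/-!
Put `𝔞 = gl(N) × 𝔤`, so that `L gl(N) ⊕ L𝔤 = L𝔞`. On the centerless algebra `W ⋉ L𝔞` there are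
three families of scalar 2-cocycles: the Virasoro cocycle `m³ - m`, the coupling `m² φ(X)` of
`L_m` with `X(-m)` for a functional `φ` on `𝔞` vanishing on brackets, and the affine cocycle
`m β(X, Y)` for a symmetric invariant form `β` on `𝔞`. With `φ(X, Y) = (k₀/2) tr X + (1/2) φ_g(Y)`
and `β` the sum of `k₁ tr(XX')`, `k₂ tr(X) tr(X')`, `k B(Y, Y')` and the symmetrization of
`tr(X) φ_{g'}(Y)`, all central terms of the bracket are accounted for, mixed ones included; so the
bracket is that of the central extension of `W ⋉ L𝔞` by the sum of these cocycles.
-/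

theorem finsupp_sum_apply_neg_comm {ι M N P : Type*} [InvolutiveNeg ι] [Zero M] [Zero N]
    [AddCommMonoid P] (f : ι →₀ M) (g : ι →₀ N) {h : ι → M → N → P}
    (h_left : ∀ i y, h i 0 y = 0) (h_right : ∀ i x, h i x 0 = 0) :
    (f.sum fun i x => h i x (g (-i))) = g.sum fun j y => h (-j) (f (-j)) y := by
  refine Finset.sum_bij_ne_zero (fun i _ _ => -i) (fun i _ hi => ?_) (by simp)
    (fun j _ hj => ⟨-j, ?_, by simpa using hj, neg_neg j⟩) (by simp)
  · exact Finsupp.mem_support_iff.2 fun h0 => hi (by simp only [h0, h_right])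
  · exact Finsupp.mem_support_iff.2 fun h0 => hj (by simp only [h0, h_left])

section GradedBilinear

variable {R ι M N P : Type*} [CommRing R] [AddCommGroup M] [Module R M] [AddCommGroup N]
  [Module R N] [AddCommGroup P] [Module R P]

theorem isAlt_of_finsupp_single (b : (ι →₀ M) →ₗ[R] (ι →₀ M) →ₗ[R] P)
    (self : ∀ i x, b (.single i x) (.single i x) = 0)
    (skew : ∀ i j x y, b (.single i x) (.single j y) = -b (.single j y) (.single i x)) :
    b.IsAlt := by
  have b_skew : b = -b.flip := by
    ext i x j y
    simpa using skew i j x y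
  intro f
  induction f using Finsupp.induction_linear with
  | zero => simp
  | single i x => exact self i x
  | add f g hf hg =>
    have hfg : b f g = -b g f := by simpa using congr($b_skew f g)
    simp [hf, hg, hfg]

theorem leibniz_of_finsupp_single {b : (ι →₀ M) →ₗ[R] (ι →₀ M) →ₗ[R] (ι →₀ M)}
    {e : (ι →₀ M) →ₗ[R] (ι →₀ M) →ₗ[R] P}
    (single : ∀ i j k x y z, e (.single i x) (b (.single j y) (.single k z)) =
      e (b (.single i x) (.single j y)) (.single k z) +
        e (.single j y) (b (.single i x) (.single k z)))
    (f g h : ι →₀ M) : e f (b g h) = e (b f g) h + e g (b f h) := by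
  induction f using Finsupp.induction_linear with
  | zero => simp
  | add f₁ f₂ hf₁ hf₂ => simp only [map_add, LinearMap.add_apply, hf₁, hf₂]; abel
  | single i x =>
  induction g using Finsupp.induction_linear with
  | zero => simp
  | add g₁ g₂ hg₁ hg₂ => simp only [map_add, LinearMap.add_apply, hg₁, hg₂]; abel
  | single j y =>
  induction h using Finsupp.induction_linear with
  | zero => simp
  | add h₁ h₂ hh₁ hh₂ => simp only [map_add, hh₁, hh₂]; abel
  | single k z => exact single i j k x y z

/-- The bilinear map on finitely supported functions with homogeneous components `μ i j`: the
component of degree `i` is multiplied with the one of degree `j` into degree `i + j`. -/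
noncomputable def convolution [Add ι] (μ : ι → ι → M →ₗ[R] N →ₗ[R] P) :
    (ι →₀ M) →ₗ[R] (ι →₀ N) →ₗ[R] (ι →₀ P) :=
  Finsupp.lsum R fun i =>
    (Finsupp.lsum R fun j => ((μ i j).compr₂ (Finsupp.lsingle (i + j))).flip).flip

theorem convolution_apply [Add ι] (μ : ι → ι → M →ₗ[R] N →ₗ[R] P) (f : ι →₀ M) (g : ι →₀ N) :
    convolution μ f g = f.sum fun i x => g.sum fun j y => Finsupp.single (i + j) (μ i j x y) := by
  simp [convolution, Finsupp.sum, LinearMap.sum_apply]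

@[simp]
theorem convolution_single [Add ι] (μ : ι → ι → M →ₗ[R] N →ₗ[R] P) (i j : ι) (x : M) (y : N) :
    convolution μ (.single i x) (.single j y) = .single (i + j) (μ i j x y) := by
  simp [convolution_apply]

/-- The bilinear map `∑ i, ω i (f i) (g (-i))` pairing opposite degrees, which is how the factors
`δ_{m+n,0}` of central terms are encoded. -/
noncomputable def antidiagonalPairing [Neg ι] (ω : ι → M →ₗ[R] N →ₗ[R] P) :
    (ι →₀ M) →ₗ[R] (ι →₀ N) →ₗ[R] P :=
  Finsupp.lsum R fun i => (ω i).compl₂ (Finsupp.lapply (-i))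

theorem antidiagonalPairing_apply [Neg ι] (ω : ι → M →ₗ[R] N →ₗ[R] P) (f : ι →₀ M) (g : ι →₀ N) :
    antidiagonalPairing ω f g = f.sum fun i x => ω i x (g (-i)) := by
  simp [antidiagonalPairing, Finsupp.sum, LinearMap.sum_apply]

theorem antidiagonalPairing_single [AddGroup ι] [DecidableEq ι] (ω : ι → M →ₗ[R] N →ₗ[R] P)
    (i j : ι) (x : M) (y : N) :
    antidiagonalPairing ω (.single i x) (.single j y) = if i + j = 0 then ω i x y else 0 := by
  rw [antidiagonalPairing_apply, Finsupp.sum_single_index (by simp), Finsupp.single_apply,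
    apply_ite (ω i x), map_zero]
  simp only [← neg_eq_iff_add_eq_zero, eq_comm]

theorem antidiagonalPairing_isAlt [AddGroup ι] {ω : ι → M →ₗ[R] M →ₗ[R] P}
    (self : ∀ i, i + i = 0 → (ω i).IsAlt) (skew : ∀ i x y, ω (-i) y x = -ω i x y) :
    (antidiagonalPairing ω).IsAlt := by
  classical
  refine isAlt_of_finsupp_single _ (fun i x => ?_) fun i j x y => ?_
  · rw [antidiagonalPairing_single]
    split_ifs with h
    exacts [self i h x, rfl]
  · simp only [antidiagonalPairing_single]
    by_cases h : i + j = 0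
    · obtain rfl : j = -i := eq_neg_of_add_eq_zero_right h
      simp [skew]
    · simp [h, mt add_eq_zero_comm.1 h]

theorem antidiagonalPairing_leibniz [AddCommGroup ι] {μ : ι → ι → M →ₗ[R] M →ₗ[R] M}
    {ω : ι → M →ₗ[R] M →ₗ[R] P}
    (leibniz : ∀ i j k, i + j + k = 0 → ∀ x y z,
      ω i x (μ j k y z) = ω (i + j) (μ i j x y) z + ω j y (μ i k x z))
    (f g h : ι →₀ M) :
    antidiagonalPairing ω f (convolution μ g h) =
      antidiagonalPairing ω (convolution μ f g) h +
        antidiagonalPairing ω g (convolution μ f h) := by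
  classical
  refine leibniz_of_finsupp_single (fun i j k x y z => ?_) f g h
  simp only [convolution_single, antidiagonalPairing_single, ← add_assoc, add_comm j i]
  split_ifs with hijk
  · exact leibniz i j k hijk x y z
  · simp

theorem convolution_isAlt [AddCommMagma ι] {μ : ι → ι → M →ₗ[R] M →ₗ[R] M}
    (self : ∀ i, (μ i i).IsAlt) (skew : ∀ i j x y, μ i j x y = -μ j i y x) :
    (convolution μ).IsAlt := by
  refine isAlt_of_finsupp_single _ (fun i x => ?_) fun i j x y => ?_
  · rw [convolution_single, (self i).self_eq_zero, Finsupp.single_zero]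
  · rw [convolution_single, convolution_single, add_comm, skew, Finsupp.single_neg]

theorem convolution_leibniz [AddCommSemigroup ι] {μ : ι → ι → M →ₗ[R] M →ₗ[R] M}
    (leibniz : ∀ i j k x y z,
      μ i (j + k) x (μ j k y z) = μ (i + j) k (μ i j x y) z + μ j (i + k) y (μ i k x z))
    (f g h : ι →₀ M) :
    convolution μ f (convolution μ g h) =
      convolution μ (convolution μ f g) h + convolution μ g (convolution μ f h) := by
  refine leibniz_of_finsupp_single (fun i j k x y z => ?_) f g h
  simp only [convolution_single]
  rw [leibniz, Finsupp.single_add, add_assoc, add_left_comm j i k]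

end GradedBilinear

/-- The semidirect sum `W ⋉ L𝔞` of the Witt algebra and the loop algebra of `𝔞`. It is encoded as
one space of finitely supported functions: the value `(a, X)` at `m` stands for `a L_m + X(m)`. -/
def WittCurrent (R 𝔞 : Type*) [CommRing R] [LieRing 𝔞] : Type _ := ℤ →₀ R × 𝔞

namespace WittCurrent

variable {R 𝔞 : Type*} [CommRing R] [LieRing 𝔞] [LieAlgebra R 𝔞]

noncomputable instance : AddCommGroup (WittCurrent R 𝔞) :=
  inferInstanceAs (AddCommGroup (ℤ →₀ R × 𝔞))

noncomputable instance : Module R (WittCurrent R 𝔞) := inferInstanceAs (Module R (ℤ →₀ R × 𝔞))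

/-- The identification of `W ⋉ L𝔞` with the space of finitely supported functions encoding it. -/
noncomputable def toFinsupp : WittCurrent R 𝔞 ≃ₗ[R] (ℤ →₀ R × 𝔞) := LinearEquiv.refl R _

/-- The component of the bracket of `W ⋉ L𝔞` in degrees `m` and `n`, with values in degree
`m + n`. -/
def homogBracket (m n : ℤ) : R × 𝔞 →ₗ[R] R × 𝔞 →ₗ[R] R × 𝔞 :=
  LinearMap.mk₂ R
    (fun x y =>
      ((m - n : R) * (x.1 * y.1), (m * y.1 : R) • x.2 - (n * x.1 : R) • y.2 + ⁅x.2, y.2⁆))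
    (fun _ _ _ => by
      ext <;> simp only [Prod.fst_add, Prod.snd_add, add_lie] <;> [ring; module])
    (fun _ _ _ => by
      ext <;> simp only [Prod.smul_fst, Prod.smul_snd, smul_eq_mul, smul_lie] <;> [ring; module])
    (fun _ _ _ => by
      ext <;> simp only [Prod.fst_add, Prod.snd_add, lie_add] <;> [ring; module])
    (fun _ _ _ => by
      ext <;> simp only [Prod.smul_fst, Prod.smul_snd, smul_eq_mul, lie_smul] <;> [ring; module])

@[simp]
theorem homogBracket_apply (m n : ℤ) (x y : R × 𝔞) :
    homogBracket m n x y =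
      ((m - n : R) * (x.1 * y.1), (m * y.1 : R) • x.2 - (n * x.1 : R) • y.2 + ⁅x.2, y.2⁆) := rfl

theorem homogBracket_isAlt (m : ℤ) : (homogBracket (R := R) (𝔞 := 𝔞) m m).IsAlt := by
  intro x
  simp

theorem homogBracket_skew (m n : ℤ) (x y : R × 𝔞) :
    homogBracket m n x y = -homogBracket n m y x := by
  ext
  · simp only [homogBracket_apply, Prod.neg_mk]
    ring
  · simp only [homogBracket_apply, Prod.neg_mk, ← lie_skew x.2 y.2]
    abel

theorem homogBracket_leibniz (m n p : ℤ) (x y z : R × 𝔞) :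
    homogBracket m (n + p) x (homogBracket n p y z) =
      homogBracket (m + n) p (homogBracket m n x y) z +
        homogBracket n (m + p) y (homogBracket m p x z) := by
  ext
  · simp only [homogBracket_apply, Int.cast_add, Prod.mk_add_mk]
    ring
  · simp only [homogBracket_apply, Int.cast_add, Prod.mk_add_mk, lie_add, lie_sub, lie_smul,
      add_lie, sub_lie, smul_lie, leibniz_lie x.2 y.2 z.2, ← lie_skew x.2 y.2]
    module

noncomputable instance : LieRing (WittCurrent R 𝔞) where
  bracket u v := convolution homogBracket u v
  add_lie u v w := congr($(map_add (convolution _) u v) w)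
  lie_add u := map_add (convolution _ u)
  lie_self := convolution_isAlt homogBracket_isAlt homogBracket_skew
  leibniz_lie := convolution_leibniz homogBracket_leibniz

noncomputable instance : LieAlgebra R (WittCurrent R 𝔞) where
  lie_smul r u v := map_smul (convolution _ u) r v

theorem toFinsupp_lie (u v : WittCurrent R 𝔞) :
    toFinsupp ⁅u, v⁆ = convolution homogBracket (toFinsupp u) (toFinsupp v) := rfl

/-- The coefficients of the `L_m` in an element of `W ⋉ L𝔞`. -/
noncomputable def wittPart : WittCurrent R 𝔞 →ₗ[R] ℤ →₀ R :=
  Finsupp.mapRange.linearMap (.fst R R 𝔞) ∘ₗ toFinsupp.toLinearMap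

theorem wittPart_apply (u : WittCurrent R 𝔞) (m : ℤ) : wittPart u m = (toFinsupp u m).1 := rfl

theorem sum_wittPart {P : Type*} [AddCommMonoid P] (u : WittCurrent R 𝔞) {h : ℤ → R → P}
    (h_zero : ∀ m, h m 0 = 0) :
    (wittPart u).sum h = (toFinsupp u).sum fun m x => h m x.1 :=
  Finsupp.sum_mapRange_index (hf := rfl) h_zero

theorem wittPart_lie (u v : WittCurrent R 𝔞) :
    wittPart ⁅u, v⁆ = (wittPart u).sum fun m a => (wittPart v).sum fun n b =>
      Finsupp.single (m + n) (a * b * (m - n)) := by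
  simp only [sum_wittPart, zero_mul, mul_zero, Finsupp.single_zero, Finsupp.sum_fun_zero,
    implies_true]
  simp only [wittPart, LinearMap.comp_apply, LinearEquiv.coe_coe, toFinsupp_lie,
    convolution_apply, map_finsuppSum, Finsupp.mapRange.linearMap_apply, Finsupp.mapRange_single,
    homogBracket_apply, LinearMap.fst_apply, mul_comm]

section loopPart

variable {𝔟 : Type*} [LieRing 𝔟] [LieAlgebra R 𝔟]

/-- The image in `L𝔟` of the loop algebra component of an element of `W ⋉ L𝔞`, under a Lie algebra
homomorphism `π : 𝔞 → 𝔟`. -/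
noncomputable def loopPart (π : 𝔞 →ₗ⁅R⁆ 𝔟) : WittCurrent R 𝔞 →ₗ[R] ℤ →₀ 𝔟 :=
  Finsupp.mapRange.linearMap ((π : 𝔞 →ₗ[R] 𝔟) ∘ₗ .snd R R 𝔞) ∘ₗ toFinsupp.toLinearMap

theorem loopPart_apply (π : 𝔞 →ₗ⁅R⁆ 𝔟) (u : WittCurrent R 𝔞) (m : ℤ) :
    loopPart π u m = π (toFinsupp u m).2 := rfl

theorem sum_loopPart {P : Type*} [AddCommMonoid P] (π : 𝔞 →ₗ⁅R⁆ 𝔟) (u : WittCurrent R 𝔞)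
    {h : ℤ → 𝔟 → P} (h_zero : ∀ m, h m 0 = 0) :
    (loopPart π u).sum h = (toFinsupp u).sum fun m x => h m (π x.2) :=
  Finsupp.sum_mapRange_index (hf := map_zero ((π : 𝔞 →ₗ[R] 𝔟) ∘ₗ .snd R R 𝔞)) h_zero

theorem loopPart_lie (π : 𝔞 →ₗ⁅R⁆ 𝔟) (u v : WittCurrent R 𝔞) :
    loopPart π ⁅u, v⁆ =
      ((wittPart u).sum fun m a => (loopPart π v).sum fun n Y =>
        Finsupp.single (m + n) ((a * -(n : R)) • Y)) +
      ((loopPart π u).sum fun m X => (wittPart v).sum fun n b =>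
        Finsupp.single (m + n) ((b * (m : R)) • X)) +
      ((loopPart π u).sum fun m X => (loopPart π v).sum fun n Y =>
        Finsupp.single (m + n) ⁅X, Y⁆) := by
  simp only [sum_wittPart, sum_loopPart, zero_mul, smul_zero, zero_smul, zero_lie, lie_zero,
    Finsupp.single_zero, Finsupp.sum_fun_zero, implies_true, ← Finsupp.sum_add,
    ← Finsupp.single_add]
  simp only [loopPart, LinearMap.comp_apply, LinearEquiv.coe_coe, toFinsupp_lie,
    convolution_apply, map_finsuppSum, Finsupp.mapRange.linearMap_apply, Finsupp.mapRange_single]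
  refine Finsupp.sum_congr fun m _ => Finsupp.sum_congr fun n _ => congrArg _ ?_
  simp only [LieHom.coe_toLinearMap, LinearMap.snd_apply, homogBracket_apply, map_add, map_sub,
    map_smul, LieHom.map_lie]
  module

end loopPart

open LieModule.Cohomology

variable (R 𝔞) in
/-- The trivial one-dimensional module of `W ⋉ L𝔞`, in which central charges take values. -/
abbrev Coeff := TrivialLieModule R (WittCurrent R 𝔞) R

/-- The scalar 2-cocycle of `W ⋉ L𝔞` which vanishes in degrees `m`, `n` with `m + n ≠ 0` and is
`ω m` in degrees `m`, `-m`. -/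
noncomputable def antidiagonalCocycle (ω : ℤ → LinearMap.BilinForm R (R × 𝔞))
    (alt : (ω 0).IsAlt) (skew : ∀ m x y, ω (-m) y x = -ω m x y)
    (leibniz : ∀ m n p, m + n + p = 0 → ∀ x y z, ω m x (homogBracket n p y z) =
      ω (m + n) (homogBracket m n x y) z + ω n y (homogBracket m p x z)) :
    twoCocycle R (WittCurrent R 𝔞) (Coeff R 𝔞) :=
  ⟨⟨antidiagonalPairing ω,
      antidiagonalPairing_isAlt (fun m hm => (show m = 0 by omega) ▸ alt) skew⟩,
    (mem_twoCocycle_iff_of_trivial ..).2 (antidiagonalPairing_leibniz leibniz)⟩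

/-- The component `m³ - m` of the Virasoro cocycle in degrees `m`, `-m`. -/
def virasoroForm (m : ℤ) : LinearMap.BilinForm R (R × 𝔞) :=
  ((m : R) ^ 3 - m) • .linMulLin (.fst R R 𝔞) (.fst R R 𝔞)

theorem virasoroForm_apply (m : ℤ) (x y : R × 𝔞) :
    virasoroForm m x y = ((m : R) ^ 3 - m) * (x.1 * y.1) := rfl

/-- The component in degrees `m`, `-m` of the cocycle `(L_m, X(n)) ↦ m² δ_{m+n,0} φ(X)`. -/
def twistForm (φ : 𝔞 →ₗ[R] R) (m : ℤ) : LinearMap.BilinForm R (R × 𝔞) :=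
  (m : R) ^ 2 • (.linMulLin (.fst R R 𝔞) (φ ∘ₗ .snd R R 𝔞) -
    .linMulLin (φ ∘ₗ .snd R R 𝔞) (.fst R R 𝔞))

theorem twistForm_apply (φ : 𝔞 →ₗ[R] R) (m : ℤ) (x y : R × 𝔞) :
    twistForm φ m x y = (m : R) ^ 2 * (x.1 * φ y.2 - φ x.2 * y.1) := rfl

/-- The component in degrees `m`, `-m` of the affine cocycle
`(X(m), Y(n)) ↦ m δ_{m+n,0} β(X, Y)`. -/
def affineForm (β : LinearMap.BilinForm R 𝔞) (m : ℤ) : LinearMap.BilinForm R (R × 𝔞) :=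
  (m : R) • β.comp (.snd R R 𝔞) (.snd R R 𝔞)

theorem affineForm_apply (β : LinearMap.BilinForm R 𝔞) (m : ℤ) (x y : R × 𝔞) :
    affineForm β m x y = m * β x.2 y.2 := rfl

/-- The Virasoro (Gelfand–Fuchs) cocycle, in the normalization `m³ - m`. -/
noncomputable def virasoroCocycle : twoCocycle R (WittCurrent R 𝔞) (Coeff R 𝔞) :=
  antidiagonalCocycle virasoroForm (fun x => by simp [virasoroForm_apply])
    (fun m x y => by simp only [virasoroForm_apply]; push_cast; ring)
    (fun m n p h x y z => by
      obtain rfl : p = -m - n := by omega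
      simp only [virasoroForm_apply, homogBracket_apply]
      push_cast
      ring)

/-- The cocycle coupling the Witt algebra to `L𝔞` through a linear functional on `𝔞` which vanishes
on brackets. -/
noncomputable def twistCocycle (φ : 𝔞 →ₗ[R] R) (hφ : ∀ X Y : 𝔞, φ ⁅X, Y⁆ = 0) :
    twoCocycle R (WittCurrent R 𝔞) (Coeff R 𝔞) :=
  antidiagonalCocycle (twistForm φ) (fun x => by simp [twistForm_apply])
    (fun m x y => by simp only [twistForm_apply]; push_cast; ring)
    (fun m n p h x y z => by
      obtain rfl : p = -m - n := by omega
      simp only [twistForm_apply, homogBracket_apply, map_add, map_sub, map_smul, smul_eq_mul, hφ]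
      push_cast
      ring)

/-- The cocycle of `L𝔞` attached to a symmetric invariant bilinear form on `𝔞`, which defines the
affine Lie algebra. -/
noncomputable def affineCocycle (β : LinearMap.BilinForm R 𝔞) (symm : ∀ X Y, β X Y = β Y X)
    (inv : ∀ X Y Z : 𝔞, β ⁅X, Y⁆ Z = β X ⁅Y, Z⁆) :
    twoCocycle R (WittCurrent R 𝔞) (Coeff R 𝔞) :=
  antidiagonalCocycle (affineForm β) (fun x => by simp [affineForm_apply])
    (fun m x y => by simp only [affineForm_apply, symm y.2]; push_cast; ring)
    (fun m n p h x y z => by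
      obtain rfl : p = -m - n := by omega
      have cyc : β y.2 ⁅x.2, z.2⁆ = -β x.2 ⁅y.2, z.2⁆ := by
        rw [← inv, ← inv, ← lie_skew, map_neg, LinearMap.neg_apply]
      simp only [affineForm_apply, homogBracket_apply, map_add, map_sub, map_smul,
        LinearMap.add_apply, LinearMap.sub_apply, LinearMap.smul_apply, smul_eq_mul, inv, cyc,
        symm y.2 x.2]
      push_cast
      ring)

/-- The combination of the Virasoro cocycle with coefficient `γ`, the coupling given by `φ` and the
affine cocycle of `β`. -/
noncomputable def centralCocycle (γ : R) {φ : 𝔞 →ₗ[R] R} (hφ : ∀ X Y : 𝔞, φ ⁅X, Y⁆ = 0)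
    {β : LinearMap.BilinForm R 𝔞} (symm : ∀ X Y, β X Y = β Y X)
    (inv : ∀ X Y Z : 𝔞, β ⁅X, Y⁆ Z = β X ⁅Y, Z⁆) :
    twoCocycle R (WittCurrent R 𝔞) (Coeff R 𝔞) :=
  γ • virasoroCocycle + twistCocycle φ hφ + affineCocycle β symm inv

theorem centralCocycle_apply (γ : R) {φ : 𝔞 →ₗ[R] R} (hφ : ∀ X Y : 𝔞, φ ⁅X, Y⁆ = 0)
    {β : LinearMap.BilinForm R 𝔞} (symm : ∀ X Y, β X Y = β Y X)
    (inv : ∀ X Y Z : 𝔞, β ⁅X, Y⁆ Z = β X ⁅Y, Z⁆) (u v : WittCurrent R 𝔞) :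
    TrivialLieModule.equiv R (WittCurrent R 𝔞) R
        ((centralCocycle γ hφ symm inv : twoCochain R (WittCurrent R 𝔞) (Coeff R 𝔞)) u v) =
      (toFinsupp u).sum fun m x => γ * virasoroForm m x (toFinsupp v (-m)) +
        twistForm φ m x (toFinsupp v (-m)) + affineForm β m x (toFinsupp v (-m)) := by
  calc
    _ = γ * antidiagonalPairing virasoroForm (toFinsupp u) (toFinsupp v) +
        antidiagonalPairing (twistForm φ) (toFinsupp u) (toFinsupp v) +
        antidiagonalPairing (affineForm β) (toFinsupp u) (toFinsupp v) := rfl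
    _ = _ := by
      simp only [antidiagonalPairing_apply, Finsupp.sum, Finset.mul_sum, Finset.sum_add_distrib]

end WittCurrent

namespace CurVir

open LieModule.Cohomology WittCurrent

attribute [local instance] LieRing.ofAssociativeRing

variable {N : ℕ} {𝔤 : Type*} [LieRing 𝔤] [LieAlgebra ℝ 𝔤]

/-- The Lie algebra `gl(N) × 𝔤`, whose loop algebra carries both families of currents. -/
abbrev Currents (N : ℕ) (𝔤 : Type*) : Type _ := Matrix (Fin N) (Fin N) ℝ × 𝔤

/-- The functional on `gl(N) × 𝔤` through which the currents couple to the Witt algebra. -/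
noncomputable def twistFunctional (φg : 𝔤 →ₗ[ℝ] ℝ) (k0 : ℝ) : Currents N 𝔤 →ₗ[ℝ] ℝ :=
  (k0 / 2) • Matrix.traceLinearMap (Fin N) ℝ ℝ ∘ₗ .fst ℝ _ 𝔤 + (1 / 2 : ℝ) • φg ∘ₗ .snd ℝ _ 𝔤

theorem twistFunctional_apply (φg : 𝔤 →ₗ[ℝ] ℝ) (k0 : ℝ) (x : Currents N 𝔤) :
    twistFunctional φg k0 x = k0 / 2 * x.1.trace + 1 / 2 * φg x.2 := rfl

theorem twistFunctional_lie {φg : 𝔤 →ₗ[ℝ] ℝ} (hφg : ∀ X Y : 𝔤, φg ⁅X, Y⁆ = 0) (k0 : ℝ)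
    (x y : Currents N 𝔤) : twistFunctional φg k0 ⁅x, y⁆ = 0 := by
  rw [twistFunctional_apply, LieAlgebra.Prod.bracket_apply,
    LieAlgebra.matrix_trace_commutator_zero (Fin N) ℝ, hφg, mul_zero, mul_zero, add_zero]

/-- The invariant form on `gl(N) × 𝔤` giving the central terms among currents: levels `k1`, `k2`
for `gl(N)` and `k` for `𝔤`, and the mixed term given by `tr` and `φg'`. -/
noncomputable def levelForm (B : 𝔤 →ₗ[ℝ] 𝔤 →ₗ[ℝ] ℝ) (φg' : 𝔤 →ₗ[ℝ] ℝ) (k1 k2 k : ℝ) :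
    LinearMap.BilinForm ℝ (Currents N 𝔤) :=
  letI gl := LinearMap.fst ℝ (Matrix (Fin N) (Fin N) ℝ) 𝔤
  letI tr := Matrix.traceLinearMap (Fin N) ℝ ℝ ∘ₗ gl
  letI φ' := φg' ∘ₗ .snd ℝ _ 𝔤
  k1 • ((LinearMap.mul ℝ _).compr₂ (Matrix.traceLinearMap (Fin N) ℝ ℝ)).compl₁₂ gl gl +
    k2 • LinearMap.BilinForm.linMulLin tr tr +
    k • B.compl₁₂ (.snd ℝ _ 𝔤) (.snd ℝ _ 𝔤) +
    (LinearMap.BilinForm.linMulLin tr φ' + LinearMap.BilinForm.linMulLin φ' tr)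

theorem levelForm_apply (B : 𝔤 →ₗ[ℝ] 𝔤 →ₗ[ℝ] ℝ) (φg' : 𝔤 →ₗ[ℝ] ℝ) (k1 k2 k : ℝ)
    (x y : Currents N 𝔤) :
    levelForm B φg' k1 k2 k x y =
      k1 * (x.1 * y.1).trace + k2 * (x.1.trace * y.1.trace) + k * B x.2 y.2 +
        (x.1.trace * φg' y.2 + φg' x.2 * y.1.trace) := rfl

theorem levelForm_symm {B : 𝔤 →ₗ[ℝ] 𝔤 →ₗ[ℝ] ℝ} (hB : ∀ X Y : 𝔤, B X Y = B Y X) (φg' : 𝔤 →ₗ[ℝ] ℝ)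
    (k1 k2 k : ℝ) (x y : Currents N 𝔤) :
    levelForm B φg' k1 k2 k x y = levelForm B φg' k1 k2 k y x := by
  simp only [levelForm_apply, hB y.2, Matrix.trace_mul_comm y.1]
  ring

theorem levelForm_lie {B : 𝔤 →ₗ[ℝ] 𝔤 →ₗ[ℝ] ℝ} (hB : ∀ X Y Z : 𝔤, B ⁅X, Y⁆ Z = B X ⁅Y, Z⁆)
    {φg' : 𝔤 →ₗ[ℝ] ℝ} (hφg' : ∀ X Y : 𝔤, φg' ⁅X, Y⁆ = 0) (k1 k2 k : ℝ) (x y z : Currents N 𝔤) :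
    levelForm B φg' k1 k2 k ⁅x, y⁆ z = levelForm B φg' k1 k2 k x ⁅y, z⁆ := by
  have trace_lie_mul (X Y Z : Matrix (Fin N) (Fin N) ℝ) :
      (⁅X, Y⁆ * Z).trace = (X * ⁅Y, Z⁆).trace := by
    simp only [Ring.lie_def, sub_mul, mul_sub, Matrix.trace_sub, mul_assoc]
    rw [Matrix.trace_mul_comm Y (X * Z), mul_assoc]
  simp only [levelForm_apply, LieAlgebra.Prod.bracket_apply,
    LieAlgebra.matrix_trace_commutator_zero (Fin N) ℝ, trace_lie_mul, hB, hφg']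
  ring

/-- The identification of `(W ⋉ L(gl(N) × 𝔤)) × ℝ` with the vector space `CurVir N 𝔤`. -/
noncomputable def decomposition :
    (WittCurrent ℝ (Currents N 𝔤) × Coeff ℝ (Currents N 𝔤)) ≃ₗ[ℝ] CurVir N 𝔤 where
  toFun u := (wittPart u.1, loopPart (LieHom.fst ℝ _ _) u.1, loopPart (LieHom.snd ℝ _ _) u.1,
    TrivialLieModule.equiv ℝ _ ℝ u.2)
  invFun x :=
    (toFinsupp.symm (.zipWith Prod.mk rfl x.1 (.zipWith Prod.mk rfl x.2.1 x.2.2.1)),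
      (TrivialLieModule.equiv ℝ _ ℝ).symm x.2.2.2)
  map_add' u v := by simp only [Prod.fst_add, Prod.snd_add, map_add, Prod.mk_add_mk]
  map_smul' r u := by
    simp only [Prod.smul_fst, Prod.smul_snd, map_smul, Prod.smul_mk, RingHom.id_apply]
  left_inv u := Prod.ext (Finsupp.ext fun m => rfl) rfl
  right_inv x := by ext <;> rfl

theorem decomposition_apply (u : WittCurrent ℝ (Currents N 𝔤)) (r : Coeff ℝ (Currents N 𝔤)) :
    decomposition (u, r) =
      (wittPart u, loopPart (LieHom.fst ℝ _ _) u, loopPart (LieHom.snd ℝ _ _) u,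
        TrivialLieModule.equiv ℝ _ ℝ r) := rfl

section Bracket

variable {B : 𝔤 →ₗ[ℝ] 𝔤 →ₗ[ℝ] ℝ} (hBsymm : ∀ X Y : 𝔤, B X Y = B Y X)
  (hBinv : ∀ X Y Z : 𝔤, B ⁅X, Y⁆ Z = B X ⁅Y, Z⁆) {φg φg' : 𝔤 →ₗ[ℝ] ℝ}
  (hφg : ∀ X Y : 𝔤, φg ⁅X, Y⁆ = 0) (hφg' : ∀ X Y : 𝔤, φg' ⁅X, Y⁆ = 0) (c k0 k1 k2 k : ℝ)

variable (N) in
/-- The cocycle collecting all central terms of the bracket of `CurVir N 𝔤`. -/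
noncomputable abbrev cocycle :
    twoCocycle ℝ (WittCurrent ℝ (Currents N 𝔤)) (Coeff ℝ (Currents N 𝔤)) :=
  centralCocycle (c / 12) (twistFunctional_lie hφg k0)
    (levelForm_symm hBsymm φg' k1 k2 k) (levelForm_lie hBinv hφg' k1 k2 k)

theorem curVirBracket_decomposition (u v : WittCurrent ℝ (Currents N 𝔤))
    (r s : Coeff ℝ (Currents N 𝔤)) :
    curVirBracket N 𝔤 B φg φg' c k0 k1 k2 k (decomposition (u, r)) (decomposition (v, s)) =
      decomposition (⁅u, v⁆, (cocycle N hBsymm hBinv hφg hφg' c k0 k1 k2 k :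
        twoCochain ℝ (WittCurrent ℝ (Currents N 𝔤)) (Coeff ℝ (Currents N 𝔤))) u v) := by
  -- `curVirBracket` takes the sums for `[X(m), L_n]`, `[Y(m), L_n]` and `[Y(m), X(n)]` over the
  -- support of its second argument, whereas cocycles are sums over the first.
  have swap_trace := finsupp_sum_apply_neg_comm (toFinsupp u) (toFinsupp v)
    (h := fun m x y => y.1 * (k0 / 2) * (m : ℝ) ^ 2 * x.2.1.trace) (by simp) (by simp)
  have swap_functional := finsupp_sum_apply_neg_comm (toFinsupp u) (toFinsupp v)
    (h := fun m x y => y.1 * (1 / 2) * (m : ℝ) ^ 2 * φg x.2.2) (by simp) (by simp)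
  have swap_mixed := finsupp_sum_apply_neg_comm (toFinsupp u) (toFinsupp v)
    (h := fun m x y => -(m : ℝ) * y.2.1.trace * φg' x.2.2) (by simp) (by simp)
  simp only [Int.cast_neg, neg_neg, neg_sq] at swap_trace swap_functional swap_mixed
  simp only [decomposition_apply]
  rw [wittPart_lie, loopPart_lie, loopPart_lie, curVirBracket]
  congr 3
  rw [centralCocycle_apply]
  simp only [sum_wittPart, sum_loopPart, wittPart_apply, loopPart_apply, LieHom.fst_apply,
    LieHom.snd_apply, zero_mul, mul_zero, Matrix.trace_zero, map_zero,
    LinearMap.zero_apply, add_zero, implies_true]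
  rw [← swap_trace, ← swap_functional, ← swap_mixed]
  simp only [← Finsupp.sum_add, ← Finsupp.sum_sub]
  refine Finsupp.sum_congr fun m _ => ?_
  simp only [virasoroForm_apply, twistForm_apply, affineForm_apply, twistFunctional_apply,
    levelForm_apply]
  ring

/-- The central extension of `W ⋉ L(gl(N) × 𝔤)` by a cocycle, identified as a vector space with
`CurVir N 𝔤`. -/
noncomputable def extensionEquiv
    (ω : twoCocycle ℝ (WittCurrent ℝ (Currents N 𝔤)) (Coeff ℝ (Currents N 𝔤))) :
    LieAlgebra.ofTwoCocycle ω ≃ₗ[ℝ] CurVir N 𝔤 :=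
  { (LieAlgebra.ofProd ω).symm with
    map_add' := LieAlgebra.of_symm_add ω
    map_smul' := LieAlgebra.of_symm_smul ω } ≪≫ₗ decomposition

theorem extensionEquiv_lie
    (u v : LieAlgebra.ofTwoCocycle (cocycle N hBsymm hBinv hφg hφg' c k0 k1 k2 k)) :
    extensionEquiv _ ⁅u, v⁆ =
      curVirBracket N 𝔤 B φg φg' c k0 k1 k2 k (extensionEquiv _ u) (extensionEquiv _ v) := by
  have apply_ofProd (p) : extensionEquiv (cocycle N hBsymm hBinv hφg hφg' c k0 k1 k2 k)
      (LieAlgebra.ofProd _ p) = decomposition p := rfl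
  obtain ⟨⟨u, r⟩, rfl⟩ := (LieAlgebra.ofProd _).surjective u
  obtain ⟨⟨v, s⟩, rfl⟩ := (LieAlgebra.ofProd _).surjective v
  simp only [LieAlgebra.bracket_ofTwoCocycle, Equiv.symm_apply_apply, trivial_lie_zero, add_zero,
    sub_zero, apply_ofProd, curVirBracket_decomposition hBsymm hBinv hφg hφg']
  rfl

end Bracket

end CurVir

theorem curVir_isLieAlgebra_general (N : ℕ) (𝔤 : Type*) [LieRing 𝔤] [LieAlgebra ℝ 𝔤]
    (B : 𝔤 →ₗ[ℝ] 𝔤 →ₗ[ℝ] ℝ) (hBsymm : ∀ X Y : 𝔤, B X Y = B Y X)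
    (hBinv : ∀ X Y Z : 𝔤, B ⁅X, Y⁆ Z = B X ⁅Y, Z⁆)
    (φg φg' : 𝔤 →ₗ[ℝ] ℝ)
    (hφg : ∀ X Y : 𝔤, φg ⁅X, Y⁆ = 0) (hφg' : ∀ X Y : 𝔤, φg' ⁅X, Y⁆ = 0)
    (c k0 k1 k2 k : ℝ) :
    (∀ x y : CurVir N 𝔤,
      curVirBracket N 𝔤 B φg φg' c k0 k1 k2 k x y
        = - curVirBracket N 𝔤 B φg φg' c k0 k1 k2 k y x) ∧
    (∀ x y z : CurVir N 𝔤,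
      curVirBracket N 𝔤 B φg φg' c k0 k1 k2 k
          (curVirBracket N 𝔤 B φg φg' c k0 k1 k2 k x y) z
        + curVirBracket N 𝔤 B φg φg' c k0 k1 k2 k
          (curVirBracket N 𝔤 B φg φg' c k0 k1 k2 k y z) x
        + curVirBracket N 𝔤 B φg φg' c k0 k1 k2 k
          (curVirBracket N 𝔤 B φg φg' c k0 k1 k2 k z x) y = 0) := by
  let e := CurVir.extensionEquiv (CurVir.cocycle N hBsymm hBinv hφg hφg' c k0 k1 k2 k)
  have bracket_eq (u v) : curVirBracket N 𝔤 B φg φg' c k0 k1 k2 k (e u) (e v) = e ⁅u, v⁆ :=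
    (CurVir.extensionEquiv_lie hBsymm hBinv hφg hφg' c k0 k1 k2 k u v).symm
  refine ⟨e.surjective.forall₂.2 fun u v => ?_, e.surjective.forall₃.2 fun u v w => ?_⟩
  · rw [bracket_eq, bracket_eq, ← map_neg, lie_skew]
  · have jacobi : ⁅⁅u, v⁆, w⁆ + ⁅⁅v, w⁆, u⁆ + ⁅⁅w, u⁆, v⁆ = 0 := by
      rw [← neg_zero, ← lie_jacobi w u v, neg_add, neg_add, lie_skew, lie_skew, lie_skew]
    simp only [bracket_eq, ← map_add, jacobi, map_zero]

/-- The full current–Virasoro algebra `Vir_c ⋉̃_{k₀,g}( ĝl(N)_{k₁,k₂} ⊕̃_{g'} ĝ_k )`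
of eqs. (3.7) and (4.4) is a Lie algebra: for a finite-dimensional real Lie algebra
`𝔤`, a symmetric invariant bilinear form `B`, and linear functionals `φ_g, φ_{g'}`
vanishing on `[𝔤,𝔤]`, the bracket above is antisymmetric and satisfies the Jacobi
identity. -/
theorem curVir_isLieAlgebra (N : ℕ) (hN : 1 ≤ N) (𝔤 : Type*) [LieRing 𝔤]
    [LieAlgebra ℝ 𝔤] [FiniteDimensional ℝ 𝔤]
    (B : 𝔤 →ₗ[ℝ] 𝔤 →ₗ[ℝ] ℝ) (hBsymm : ∀ X Y : 𝔤, B X Y = B Y X)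
    (hBinv : ∀ X Y Z : 𝔤, B ⁅X, Y⁆ Z = B X ⁅Y, Z⁆)
    (φg φg' : 𝔤 →ₗ[ℝ] ℝ)
    (hφg : ∀ X Y : 𝔤, φg ⁅X, Y⁆ = 0) (hφg' : ∀ X Y : 𝔤, φg' ⁅X, Y⁆ = 0)
    (c k0 k1 k2 k : ℝ) :
    (∀ x y : CurVir N 𝔤,
      curVirBracket N 𝔤 B φg φg' c k0 k1 k2 k x y
        = - curVirBracket N 𝔤 B φg φg' c k0 k1 k2 k y x) ∧
    (∀ x y z : CurVir N 𝔤,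
      curVirBracket N 𝔤 B φg φg' c k0 k1 k2 k
          (curVirBracket N 𝔤 B φg φg' c k0 k1 k2 k x y) z
        + curVirBracket N 𝔤 B φg φg' c k0 k1 k2 k
          (curVirBracket N 𝔤 B φg φg' c k0 k1 k2 k y z) x
        + curVirBracket N 𝔤 B φg φg' c k0 k1 k2 k
          (curVirBracket N 𝔤 B φg φg' c k0 k1 k2 k z x) y = 0) :=
  curVir_isLieAlgebra_general N 𝔤 B hBsymm hBinv φg φg' hφg hφg' c k0 k1 k2 k
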